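/- Let U be an open neighborhood of (0,0) in ℝ², and suppose Λ : U → ℝ and Φ : U × [0,π] → ℝ are real-analytic functions such that for every (η,δ) ∈ U: the function x ↦ Φ(η,δ,x) satisfies T_{η,δ}Φ(η,δ,·) + Λ(η,δ)·Φ(η,δ,·) = 0 on (0,π), Φ(η,δ,0) = Φ(η,δ,π) = 0, and the normalization ∫₀^π Φ(η,δ,x) sin(x) dx = π/2; and suppose Λ(0,0) = 4 and Φ(0,0,x) = sin(x). Then there exist a constant C > 0 and a neighborhood V ⊆ U of (0,0) such that |Λ(η,δ) − 4 + 3πηδ + 16η²| ≤ C(|η|³ + |δ|³) for all (η,δ) ∈ V. -/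

import Mathlib

open Set Real

noncomputable section

/-- The operator `T_{η,δ}`, obtained from `T_{η,ε}` by the substitution
`ε = −(π/2)η(1+δ)`, with derivatives taken within `[0,π]`. -/
def Tdd (η δ : ℝ) (u : ℝ → ℝ) (x : ℝ) : ℝ :=
  derivWithin (derivWithin u (Set.Icc 0 π)) (Set.Icc 0 π) x
    - (η * (1 - (π/2) * η * (1 + δ)) / (1 - η * (1 - (π/2) * η * (1 + δ)) * x))
        * derivWithin u (Set.Icc 0 π) x
    - (3 * (1 - (π/2) * η * (1 + δ))^2 / (1 - η * (1 - (π/2) * η * (1 + δ)) * x)^2) * u x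

/-!
Write `s = 1 + ε = 1 - (π/2) η (1 + δ)` and divide the weight `1 - η s x` by its midpoint value `ω`.
With `ρ = s / ω`, `m = η ρ`, `κ = ρ ^ 2` and `w = 1 - m (x - π/2)`, the operator becomes
`u'' - (m / w) u' - (3 κ / w ^ 2) u`. The curve `ε = -(π/2) η (1 + δ)` is the one along which
`κ = 1 + O(η² + δ²)`, so that only the problem `κ = 1` has to be expanded, in the single small
parameter `m`. Its adjoint equation, multiplied by `w ^ 2`, has an approximate Dirichlet solution
`h = sin + m h₁ + m² h₂` with eigenvalue `4 + (3π²/2 - 16) m²` and residual `O(m³)`. Integrating an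
eigenfunction `u` against the adjoint equation for `h` gives
`Λ = 1 + 3κ + (3π²/2 - 16) m² + O(m³) + O((κ - 1) m)`, because the normalization of `u` keeps
`∫ u w² h` away from zero; it remains to expand `κ` and `m` in `(η, δ)`.
-/

open Filter Topology Asymptotics Polynomial

/-! ### Bounds uniform on a compact set -/

lemma isBigO_one_of_continuousOn_prod {X Y E : Type*} [TopologicalSpace X] [TopologicalSpace Y]
    [SeminormedAddCommGroup E] {F : X × Y → E} {U : Set X} {K : Set Y} {p : X}
    (hU : U ∈ 𝓝 p) (hK : IsCompact K) (hF : ContinuousOn F (U ×ˢ K)) :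
    F =O[𝓝 p ×ˢ 𝓟 K] (fun _ => (1 : ℝ)) := by
  have slice : MapsTo (Prod.mk p) K (U ×ˢ K) := fun y hy => ⟨mem_of_mem_nhds hU, hy⟩
  obtain ⟨M, hM⟩ := hK.exists_bound_of_continuousOn (hF.comp (by fun_prop) slice)
  refine IsBigO.of_bound (M + 1) (eventually_prod_principal_iff.2 ?_)
  have near : ∀ᶠ x in 𝓝 p, ∀ y ∈ K, x ∈ U → y ∈ K → ‖F (x, y)‖ < M + 1 :=
    hK.eventually_forall_of_forall_eventually fun y hy => by
      have := (hF (p, y) (slice hy)).norm.eventually_lt_const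
        ((hM y hy).trans_lt (lt_add_one M))
      filter_upwards [eventually_nhdsWithin_iff.1 this] with z hz hzU hzK using hz ⟨hzU, hzK⟩
  filter_upwards [near, hU] with x hx hxU y hy
  simpa using (hx y hy hxU hy).le

lemma isBigO_one_of_continuous_prod {X Y E : Type*} [TopologicalSpace X]
    [TopologicalSpace Y] [SeminormedAddCommGroup E] {F : X × Y → E} (hF : Continuous F)
    {K : Set Y} (hK : IsCompact K) (p : X) : F =O[𝓝 p ×ˢ 𝓟 K] (fun _ => (1 : ℝ)) :=
  isBigO_one_of_continuousOn_prod univ_mem hK hF.continuousOn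

lemma isBigO_intervalIntegral {X E : Type*} [NormedAddCommGroup E] [NormedSpace ℝ E]
    {l : Filter X} {a b : ℝ} {F : X × ℝ → E} {g : X → ℝ}
    (hF : F =O[l ×ˢ 𝓟 (uIcc a b)] (fun q => g q.1)) :
    (fun p => ∫ x in a..b, F (p, x)) =O[l] g := by
  obtain ⟨M, hM⟩ := hF.bound
  refine IsBigO.of_bound (M * |b - a|) ?_
  filter_upwards [eventually_prod_principal_iff.1 hM] with p hp
  calc ‖∫ x in a..b, F (p, x)‖ ≤ M * ‖g p‖ * |b - a| :=
        intervalIntegral.norm_integral_le_of_norm_le_const fun x hx =>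
          hp x (uIoc_subset_uIcc hx)
    _ = M * |b - a| * ‖g p‖ := by ring

/-! ### The adjoint equation -/

lemma integral_mul_adjoint_eq_zero {a b : ℝ} (hab : a < b) {u A A' A'' B B' C : ℝ → ℝ}
    (hu : ContDiffOn ℝ 2 u (Icc a b))
    (hA : ∀ x ∈ Icc a b, HasDerivAt A (A' x) x) (hA' : ∀ x ∈ Icc a b, HasDerivAt A' (A'' x) x)
    (hB : ∀ x ∈ Icc a b, HasDerivAt B (B' x) x)
    (hcont : ContinuousOn (fun x => A'' x - B' x + C x) (Icc a b))
    (heq : ∀ x ∈ Ioo a b, A x * derivWithin (derivWithin u (Icc a b)) (Icc a b) x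
      + B x * derivWithin u (Icc a b) x + C x * u x = 0)
    (hua : u a = 0) (hub : u b = 0) (hAa : A a = 0) (hAb : A b = 0) :
    ∫ x in a..b, u x * (A'' x - B' x + C x) = 0 := by
  have hu' : ContDiffOn ℝ 1 (derivWithin u (Icc a b)) (Icc a b) :=
    hu.derivWithin (uniqueDiffOn_Icc hab) (by norm_num)
  have interior {f : ℝ → ℝ} (hf : ContDiffOn ℝ 1 f (Icc a b)) :
      ∀ x ∈ Ioo a b, HasDerivAt f (derivWithin f (Icc a b) x) x := fun x hx =>
    ((hf.differentiableOn one_ne_zero x (Ioo_subset_Icc_self hx)).hasDerivWithinAt).hasDerivAt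
      (Icc_mem_nhds hx.1 hx.2)
  have hderiv := interior (hu.of_le one_le_two)
  have bilinearConcomitant : ∀ x ∈ Ioo a b,
      HasDerivAt (fun x => A' x * u x - A x * derivWithin u (Icc a b) x - B x * u x)
        (u x * (A'' x - B' x + C x)) x := fun x hx => by
    have hxI := Ioo_subset_Icc_self hx
    refine ((((hA' x hxI).mul (hderiv x hx)).sub ((hA x hxI).mul (interior hu' x hx))).sub
      ((hB x hxI).mul (hderiv x hx))).congr_deriv ?_
    linear_combination -heq x hx
  rw [intervalIntegral.integral_eq_sub_of_hasDerivAt_of_le hab.le ?_ bilinearConcomitant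
    ((hu.continuousOn.mul hcont).intervalIntegrable_of_Icc hab.le)]
  · simp [hua, hub, hAa, hAb]
  · exact (((HasDerivAt.continuousOn hA').mul hu.continuousOn).sub
      ((HasDerivAt.continuousOn hA).mul hu'.continuousOn)).sub
        ((HasDerivAt.continuousOn hB).mul hu.continuousOn)

/-- The weight `w = 1 - m (x - π/2)`, equal to `1` at the midpoint of `[0, π]`. -/
def centredWeight (m x : ℝ) : ℝ := 1 - m * (x - π / 2)

/-- Dirichlet eigenpairs on `[0, π]` of `u'' - (m / w) u' - (3 κ / w ^ 2) u + L u = 0`, with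
`w = centredWeight m`. The equation is multiplied by `w ^ 2`, so that no division occurs; as in
`Tdd`, derivatives are taken within `[0, π]`. -/
structure IsCentredEigenpair (m κ L : ℝ) (u : ℝ → ℝ) : Prop where
  contDiffOn : ContDiffOn ℝ 2 u (Icc 0 π)
  ode : ∀ x ∈ Ioo 0 π,
    centredWeight m x ^ 2 * derivWithin (derivWithin u (Icc 0 π)) (Icc 0 π) x
      - m * centredWeight m x * derivWithin u (Icc 0 π) x
      + (L * centredWeight m x ^ 2 - 3 * κ) * u x = 0
  apply_zero : u 0 = 0
  apply_pi : u π = 0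

/-- The formal adjoint of the operator `w² u'' - m w u' + (L w² - 3 κ) u` annihilating the
eigenfunctions of `IsCentredEigenpair`. -/
def centredAdjoint (m κ L : ℝ) (h : ℝ → ℝ) (x : ℝ) : ℝ :=
  centredWeight m x ^ 2 * deriv (deriv h) x - 3 * m * centredWeight m x * deriv h x
    + (m ^ 2 - 3 * κ + L * centredWeight m x ^ 2) * h x

lemma hasDerivAt_centredWeight (m x : ℝ) : HasDerivAt (centredWeight m) (-m) x :=
  ((((hasDerivAt_id x).sub_const (π / 2)).const_mul m).const_sub 1).congr_deriv (by ring)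

lemma continuous_centredWeight : Continuous fun q : ℝ × ℝ => centredWeight q.1 q.2 := by
  unfold centredWeight
  fun_prop

lemma continuous_centredAdjoint (m κ L : ℝ) {h : ℝ → ℝ} (hh : ContDiff ℝ 2 h) :
    Continuous (centredAdjoint m κ L h) := by
  have hw : Continuous (centredWeight m) := continuous_centredWeight.uncurry_left m
  have hh' : ContDiff ℝ 1 (deriv h) := hh.deriv'
  exact (((hw.pow 2).mul (hh'.continuous_deriv le_rfl)).sub
    ((continuous_const.mul hw).mul hh'.continuous)).add
      ((continuous_const.add (continuous_const.mul (hw.pow 2))).mul hh.continuous)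

lemma IsCentredEigenpair.integral_mul_centredAdjoint {m κ L : ℝ} {u h : ℝ → ℝ}
    (hu : IsCentredEigenpair m κ L u) (hh : ContDiff ℝ 2 h) (h0 : h 0 = 0) (hπ : h π = 0) :
    ∫ x in 0..π, u x * centredAdjoint m κ L h x = 0 := by
  have hw (x : ℝ) := hasDerivAt_centredWeight m x
  have hderiv (x : ℝ) : HasDerivAt h (deriv h x) x :=
    (hh.differentiable two_ne_zero x).hasDerivAt
  have hderiv' (x : ℝ) : HasDerivAt (deriv h) (deriv (deriv h) x) x :=
    (hh.deriv'.differentiable one_ne_zero x).hasDerivAt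
  have hadj := (continuous_centredAdjoint m κ L hh).continuousOn (s := Icc 0 π)
  have expand (x : ℝ) : centredAdjoint m κ L h x =
      (2 * m ^ 2 * h x - 4 * m * centredWeight m x * deriv h x
        + centredWeight m x ^ 2 * deriv (deriv h) x)
      - (m ^ 2 * h x - m * centredWeight m x * deriv h x)
      + (L * centredWeight m x ^ 2 - 3 * κ) * h x := by
    unfold centredAdjoint
    ring
  simp only [funext expand] at hadj ⊢
  refine integral_mul_adjoint_eq_zero pi_pos hu.contDiffOn
    (A := fun x => centredWeight m x ^ 2 * h x)
    (A' := fun x => -2 * m * centredWeight m x * h x + centredWeight m x ^ 2 * deriv h x)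
    (B := fun x => -m * centredWeight m x * h x)
    (fun x _ => (((hw x).pow 2).mul (hderiv x)).congr_deriv ?_)
    (fun x _ => ((((hw x).const_mul (-2 * m)).mul (hderiv x)).add
      (((hw x).pow 2).mul (hderiv' x))).congr_deriv ?_)
    (fun x _ => (((hw x).const_mul (-m)).mul (hderiv x)).congr_deriv ?_) hadj
    (fun x hx => ?_) hu.apply_zero hu.apply_pi (by simp [h0]) (by simp [hπ])
  · simp only [Pi.pow_apply, Nat.cast_ofNat]
    ring
  · simp only [Pi.pow_apply, Nat.cast_ofNat]
    ring
  · ring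
  · linear_combination h x * hu.ode x hx

/-! ### Perturbation expansion of the adjoint solution -/

/-- The function `P(x - π/2) sin x + Q(x - π/2) cos x`. The perturbation expansion of the
eigenfunction at `m = 0` has all its terms in this class. -/
def trigPoly (P Q : ℝ[X]) (x : ℝ) : ℝ := P.eval (x - π / 2) * sin x + Q.eval (x - π / 2) * cos x

lemma contDiff_trigPoly (P Q : ℝ[X]) {n : WithTop ℕ∞} : ContDiff ℝ n (trigPoly P Q) := by
  have hpoly (R : ℝ[X]) : ContDiff ℝ n fun x : ℝ => R.eval (x - π / 2) := by
    simp only [← coe_aeval_eq_eval]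
    exact (R.contDiff_aeval n).comp (contDiff_id.sub contDiff_const)
  exact ((hpoly P).mul contDiff_sin).add ((hpoly Q).mul contDiff_cos)

lemma deriv_trigPoly (P Q : ℝ[X]) :
    deriv (trigPoly P Q) = trigPoly (derivative P - Q) (derivative Q + P) := by
  ext x
  have hpoly (R : ℝ[X]) :
      HasDerivAt (fun x => R.eval (x - π / 2)) ((derivative R).eval (x - π / 2)) x :=
    (R.hasDerivAt (x - π / 2)).comp_sub_const x (π / 2)
  have hderiv := (((hpoly P).mul (hasDerivAt_sin x)).add ((hpoly Q).mul (hasDerivAt_cos x))).deriv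
  refine hderiv.trans ?_
  simp only [trigPoly, eval_sub, eval_add]
  ring

lemma deriv_deriv_trigPoly_add_self (P Q : ℝ[X]) (x : ℝ) :
    deriv (deriv (trigPoly P Q)) x + trigPoly P Q x =
      trigPoly (derivative (derivative P) - 2 * derivative Q)
        (derivative (derivative Q) + 2 * derivative P) x := by
  simp only [deriv_trigPoly, trigPoly, eval_sub, eval_add, eval_mul, eval_ofNat, derivative_sub,
    derivative_add]
  ring

/-- The coefficient of `m ^ 2` in the first Dirichlet eigenvalue `L` of `IsCentredEigenpair m 1`:
the value for which the equation `deriv_deriv_secondCorrection` for the second-order term of the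
expansion has a solution vanishing at `0` and `π`. -/
def secondOrderCoeff : ℝ := 3 / 2 * π ^ 2 - 16

/-- The coefficient of `m` in the formal Dirichlet solution of the adjoint equation
`centredAdjoint m 1 (4 + secondOrderCoeff * m ^ 2) h = 0`, found by undetermined coefficients. -/
def firstCorrection : ℝ → ℝ := trigPoly (3 * X) (C (3 / 2) * (C (π ^ 2 / 4) - X ^ 2))

/-- The coefficient of `m ^ 2` in the same formal solution. -/
def secondCorrection : ℝ → ℝ :=
  trigPoly (C (-9 / 8) * X ^ 4 + C (12 + 9 / 16 * π ^ 2) * X ^ 2)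
    (C (15 / 2) * (X * (C (π ^ 2 / 4) - X ^ 2)))

lemma contDiff_firstCorrection {n : WithTop ℕ∞} : ContDiff ℝ n firstCorrection :=
  contDiff_trigPoly _ _

lemma contDiff_secondCorrection {n : WithTop ℕ∞} : ContDiff ℝ n secondCorrection :=
  contDiff_trigPoly _ _

lemma deriv_deriv_firstCorrection (x : ℝ) :
    deriv (deriv firstCorrection) x + firstCorrection x = 6 * (x - π / 2) * sin x + 3 * cos x := by
  unfold firstCorrection
  rw [deriv_deriv_trigPoly_add_self]
  simp only [trigPoly, derivative_mul, derivative_ofNat, derivative_X, derivative_C,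
    derivative_sub, derivative_pow, derivative_zero, derivative_one, derivative_add, eval_add,
    eval_sub, eval_mul, eval_pow, eval_ofNat, eval_C, eval_X, eval_zero, eval_one,
    Nat.add_one_sub_one]
  push_cast
  ring

lemma deriv_deriv_secondCorrection (x : ℝ) :
    deriv (deriv secondCorrection) x + secondCorrection x =
      2 * (x - π / 2) * (deriv (deriv firstCorrection) x + 4 * firstCorrection x)
        - 3 * (x - π / 2) ^ 2 * sin x + 3 * deriv firstCorrection x - 3 * (x - π / 2) * cos x
        - (secondOrderCoeff + 1) * sin x := by
  rw [show deriv (deriv firstCorrection) x + 4 * firstCorrection x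
    = 6 * (x - π / 2) * sin x + 3 * cos x + 3 * firstCorrection x by
      linear_combination deriv_deriv_firstCorrection x]
  unfold secondCorrection firstCorrection secondOrderCoeff
  rw [deriv_deriv_trigPoly_add_self, deriv_trigPoly]
  simp only [trigPoly, derivative_mul, derivative_ofNat, derivative_X, derivative_C,
    derivative_sub, derivative_pow, derivative_zero, derivative_one, derivative_add, eval_add,
    eval_sub, eval_mul, eval_pow, eval_ofNat, eval_C, eval_X, eval_zero, eval_one,
    Nat.add_one_sub_one]
  push_cast
  ring

/-- The second-order truncation of the formal solution of the adjoint equation, against which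
eigenfunctions are integrated. -/
def testFunction (m x : ℝ) : ℝ := sin x + m * firstCorrection x + m ^ 2 * secondCorrection x

lemma contDiff_testFunction (m : ℝ) : ContDiff ℝ 2 (testFunction m) :=
  (contDiff_sin.add (contDiff_const.mul contDiff_firstCorrection)).add
    (contDiff_const.mul contDiff_secondCorrection)

lemma continuous_testFunction : Continuous fun q : ℝ × ℝ => testFunction q.1 q.2 := by
  have hfirst := (contDiff_firstCorrection (n := 0)).continuous
  have hsecond := (contDiff_secondCorrection (n := 0)).continuous
  unfold testFunction
  fun_prop

lemma testFunction_zero (m : ℝ) : testFunction m 0 = 0 := by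
  simp only [testFunction, sin_zero, firstCorrection, trigPoly, eval_mul, eval_ofNat, eval_X,
    mul_zero, eval_C, eval_sub, eval_pow, cos_zero, mul_one, zero_add, secondCorrection, eval_add]
  ring

lemma testFunction_pi (m : ℝ) : testFunction m π = 0 := by
  simp only [testFunction, sin_pi, firstCorrection, trigPoly, eval_mul, eval_ofNat, eval_X,
    mul_zero, eval_C, eval_sub, eval_pow, cos_pi, mul_neg, mul_one, zero_add, secondCorrection,
    eval_add]
  ring

lemma deriv_testFunction (m : ℝ) :
    deriv (testFunction m) = fun x =>
      cos x + m * deriv firstCorrection x + m ^ 2 * deriv secondCorrection x := by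
  ext x
  have hfirst := contDiff_firstCorrection.differentiable one_ne_zero x
  have hsecond := contDiff_secondCorrection.differentiable one_ne_zero x
  exact (((hasDerivAt_sin x).add (hfirst.hasDerivAt.const_mul m)).add
    (hsecond.hasDerivAt.const_mul (m ^ 2))).deriv

lemma deriv_deriv_testFunction (m : ℝ) :
    deriv (deriv (testFunction m)) = fun x =>
      -sin x + m * deriv (deriv firstCorrection) x + m ^ 2 * deriv (deriv secondCorrection) x := by
  ext x
  have hfirst := contDiff_firstCorrection.differentiable_deriv_two x
  have hsecond := contDiff_secondCorrection.differentiable_deriv_two x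
  rw [deriv_testFunction]
  exact (((hasDerivAt_cos x).add (hfirst.hasDerivAt.const_mul m)).add
    (hsecond.hasDerivAt.const_mul (m ^ 2))).deriv

lemma exists_centredAdjoint_testFunction_eq :
    ∃ R : ℝ × ℝ → ℝ, Continuous R ∧ ∀ m x,
      centredAdjoint m 1 (4 + secondOrderCoeff * m ^ 2) (testFunction m) x = m ^ 3 * R (m, x) := by
  have continuous_deriv_deriv {f : ℝ → ℝ} (hf : ContDiff ℝ 2 f) : Continuous (deriv (deriv f)) :=
    (hf.deriv' : ContDiff ℝ 1 (deriv f)).continuous_deriv le_rfl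
  have hfirst := (contDiff_firstCorrection (n := 0)).continuous
  have hfirst' := contDiff_firstCorrection.continuous_deriv one_le_two
  have hfirst'' := continuous_deriv_deriv contDiff_firstCorrection
  have hsecond := (contDiff_secondCorrection (n := 0)).continuous
  have hsecond' := contDiff_secondCorrection.continuous_deriv one_le_two
  have hsecond'' := continuous_deriv_deriv contDiff_secondCorrection
  let y (x : ℝ) := x - π / 2
  let F (x : ℝ) := deriv (deriv firstCorrection) x + 4 * firstCorrection x
  let S (x : ℝ) := deriv (deriv secondCorrection) x + 4 * secondCorrection x
  refine ⟨fun q =>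
    (-2 * y q.2 * S q.2 + y q.2 ^ 2 * F q.2 - 3 * deriv secondCorrection q.2
      + 3 * y q.2 * deriv firstCorrection q.2 + (1 + secondOrderCoeff) * firstCorrection q.2
      - 2 * secondOrderCoeff * y q.2 * sin q.2)
    + q.1 * (y q.2 ^ 2 * S q.2 + 3 * y q.2 * deriv secondCorrection q.2
      + (1 + secondOrderCoeff) * secondCorrection q.2
      - 2 * secondOrderCoeff * y q.2 * firstCorrection q.2 + secondOrderCoeff * y q.2 ^ 2 * sin q.2)
    + q.1 ^ 2 * (secondOrderCoeff * y q.2 ^ 2 * firstCorrection q.2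
      - 2 * secondOrderCoeff * y q.2 * secondCorrection q.2)
    + q.1 ^ 3 * (secondOrderCoeff * y q.2 ^ 2 * secondCorrection q.2), by fun_prop, fun m x => ?_⟩
  rw [centredAdjoint, deriv_deriv_testFunction, deriv_testFunction]
  simp only [testFunction, centredWeight, y, F, S]
  -- The orders `1`, `m` and `m ^ 2` cancel by the choice of the corrections and the coefficient.
  linear_combination m * deriv_deriv_firstCorrection x + m ^ 2 * deriv_deriv_secondCorrection x

lemma isBigO_centredAdjoint_testFunction :
    (fun q : ℝ × ℝ => centredAdjoint q.1 1 (4 + secondOrderCoeff * q.1 ^ 2) (testFunction q.1) q.2)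
      =O[𝓝 0 ×ˢ 𝓟 (Icc 0 π)] fun q => q.1 ^ 3 := by
  obtain ⟨R, hR, hfac⟩ := exists_centredAdjoint_testFunction_eq
  simpa only [hfac, mul_one] using
    (isBigO_refl (fun q : ℝ × ℝ => q.1 ^ 3) _).mul
      (isBigO_one_of_continuous_prod hR isCompact_Icc 0)

lemma isBigO_centredWeight_sq_sub_one_mul_testFunction :
    (fun q : ℝ × ℝ => (centredWeight q.1 q.2 ^ 2 - 1) * testFunction q.1 q.2)
      =O[𝓝 0 ×ˢ 𝓟 (Icc 0 π)] fun q => q.1 := by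
  have hh := continuous_testFunction
  have hcont : Continuous fun q : ℝ × ℝ =>
      -((q.2 - π / 2) * (2 - q.1 * (q.2 - π / 2)) * testFunction q.1 q.2) := by
    fun_prop
  refine ((isBigO_refl (fun q : ℝ × ℝ => q.1) _).mul
    (isBigO_one_of_continuous_prod hcont isCompact_Icc 0)).congr (fun q => ?_) fun q => mul_one _
  unfold centredWeight
  ring

lemma isBigO_testFunction_sub_sin :
    (fun q : ℝ × ℝ => testFunction q.1 q.2 - sin q.2) =O[𝓝 0 ×ˢ 𝓟 (Icc 0 π)] fun q => q.1 := by
  have hfirst := (contDiff_firstCorrection (n := 0)).continuous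
  have hsecond := (contDiff_secondCorrection (n := 0)).continuous
  have hcont : Continuous fun q : ℝ × ℝ => firstCorrection q.2 + q.1 * secondCorrection q.2 := by
    fun_prop
  refine ((isBigO_refl (fun q : ℝ × ℝ => q.1) _).mul
    (isBigO_one_of_continuous_prod hcont isCompact_Icc 0)).congr (fun q => ?_) fun q => mul_one _
  unfold testFunction
  ring

/-! ### Asymptotics of the centred eigenvalue -/

lemma centredAdjoint_eq (m κ L : ℝ) (h : ℝ → ℝ) (x : ℝ) :
    centredAdjoint m κ L h x = centredAdjoint m 1 (4 + secondOrderCoeff * m ^ 2) h x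
      + 3 * (κ - 1) * ((centredWeight m x ^ 2 - 1) * h x)
      + (L - (1 + 3 * κ + secondOrderCoeff * m ^ 2)) * (centredWeight m x ^ 2 * h x) := by
  unfold centredAdjoint
  ring

lemma IsCentredEigenpair.eigenvalue_sub_mul_integral {m κ L : ℝ} {u : ℝ → ℝ}
    (hu : IsCentredEigenpair m κ L u) :
    (L - (1 + 3 * κ + secondOrderCoeff * m ^ 2))
        * ∫ x in 0..π, u x * (centredWeight m x ^ 2 * testFunction m x) =
      -((∫ x in 0..π, u x * centredAdjoint m 1 (4 + secondOrderCoeff * m ^ 2) (testFunction m) x)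
        + 3 * (κ - 1)
          * ∫ x in 0..π, u x * ((centredWeight m x ^ 2 - 1) * testFunction m x)) := by
  have hw : Continuous (centredWeight m) := continuous_centredWeight.uncurry_left m
  have hh : Continuous (testFunction m) := continuous_testFunction.uncurry_left m
  have integrable {f : ℝ → ℝ} (hf : Continuous f) :
      IntervalIntegrable (fun x => u x * f x) MeasureTheory.volume 0 π :=
    (hu.contDiffOn.continuousOn.mul hf.continuousOn).intervalIntegrable_of_Icc pi_pos.le
  have hR := integrable (continuous_centredAdjoint m 1 (4 + secondOrderCoeff * m ^ 2)
    (contDiff_testFunction m))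
  have hκ := (integrable (f := fun x => (centredWeight m x ^ 2 - 1) * testFunction m x)
    (by fun_prop)).const_mul (3 * (κ - 1))
  have hL := (integrable (f := fun x => centredWeight m x ^ 2 * testFunction m x)
    (by fun_prop)).const_mul (L - (1 + 3 * κ + secondOrderCoeff * m ^ 2))
  have orthogonal := hu.integral_mul_centredAdjoint (contDiff_testFunction m)
    (testFunction_zero m) (testFunction_pi m)
  simp only [centredAdjoint_eq m κ L, mul_add, mul_left_comm (u _) (3 * (κ - 1)),
    mul_left_comm (u _) (L - _)] at orthogonal
  rw [intervalIntegral.integral_add (hR.add hκ) hL, intervalIntegral.integral_add hR hκ,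
    intervalIntegral.integral_const_mul, intervalIntegral.integral_const_mul] at orthogonal
  linarith

lemma isBigO_integral_mul {X : Type*} {l : Filter X} {a b : ℝ} (hab : a ≤ b) {m : X → ℝ}
    {u : X → ℝ → ℝ} {F : ℝ × ℝ → ℝ} {g : ℝ → ℝ} {m₀ : ℝ} (hm : Tendsto m l (𝓝 m₀))
    (hbdd : (fun q : X × ℝ => u q.1 q.2) =O[l ×ˢ 𝓟 (Icc a b)] (fun _ => (1 : ℝ)))
    (hF : F =O[𝓝 m₀ ×ˢ 𝓟 (Icc a b)] fun q => g q.1) :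
    (fun p => ∫ x in a..b, u p x * F (m p, x)) =O[l] fun p => g (m p) := by
  refine isBigO_intervalIntegral (F := fun q : X × ℝ => u q.1 q.2 * F (m q.1, q.2)) ?_
  rw [uIcc_of_le hab]
  exact (hbdd.mul (hF.comp_tendsto (hm.prodMap tendsto_id))).congr (fun _ => rfl)
    fun _ => one_mul _

lemma tendsto_integral_mul_testFunction {X : Type*} {l : Filter X} {m : X → ℝ} {u : X → ℝ → ℝ}
    (hm : Tendsto m l (𝓝 0))
    (hbdd : (fun q : X × ℝ => u q.1 q.2) =O[l ×ˢ 𝓟 (Icc 0 π)] (fun _ => (1 : ℝ)))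
    (hcont : ∀ᶠ p in l, ContinuousOn (u p) (Icc 0 π))
    (hnorm : ∀ᶠ p in l, ∫ x in 0..π, u p x * sin x = π / 2) :
    Tendsto (fun p => ∫ x in 0..π, u p x * (centredWeight (m p) x ^ 2 * testFunction (m p) x)) l
      (𝓝 (π / 2)) := by
  have hdiff := (isBigO_integral_mul (g := fun m => m) pi_pos.le hm hbdd
    (isBigO_centredWeight_sq_sub_one_mul_testFunction.add
      isBigO_testFunction_sub_sin)).trans_tendsto hm
  refine (by simpa using hdiff.const_add (π / 2) : Tendsto _ l (𝓝 (π / 2))).congr' ?_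
  filter_upwards [hcont, hnorm] with p hu hp
  have hw : Continuous (centredWeight (m p)) := continuous_centredWeight.uncurry_left (m p)
  have hh : Continuous (testFunction (m p)) := continuous_testFunction.uncurry_left (m p)
  have integrable {f : ℝ → ℝ} (hf : Continuous f) :
      IntervalIntegrable (fun x => u p x * f x) MeasureTheory.volume 0 π :=
    (hu.mul hf.continuousOn).intervalIntegrable_of_Icc pi_pos.le
  rw [← hp, ← intervalIntegral.integral_add (integrable continuous_sin)
    (integrable (by fun_prop))]
  congr 1 with x
  ring

theorem isBigO_centredEigenvalue_sub {X : Type*} {l : Filter X} {m κ L g : X → ℝ} {u : X → ℝ → ℝ}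
    (hm : Tendsto m l (𝓝 0)) (hmg : (fun p => m p ^ 3) =O[l] g)
    (hκg : (fun p => (κ p - 1) * m p) =O[l] g)
    (hu : ∀ᶠ p in l, IsCentredEigenpair (m p) (κ p) (L p) (u p))
    (hbdd : (fun q : X × ℝ => u q.1 q.2) =O[l ×ˢ 𝓟 (Icc 0 π)] (fun _ => (1 : ℝ)))
    (hnorm : ∀ᶠ p in l, ∫ x in 0..π, u p x * sin x = π / 2) :
    (fun p => L p - (1 + 3 * κ p + secondOrderCoeff * m p ^ 2)) =O[l] g := by
  have hden := tendsto_integral_mul_testFunction hm hbdd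
    (hu.mono fun p hp => hp.contDiffOn.continuousOn) hnorm
  have hpos : π / 2 ≠ 0 := by positivity
  have hR := (isBigO_integral_mul (g := fun m => m ^ 3) pi_pos.le hm hbdd
    isBigO_centredAdjoint_testFunction).trans hmg
  have hweight := isBigO_integral_mul (g := fun m => m) pi_pos.le hm hbdd
    isBigO_centredWeight_sq_sub_one_mul_testFunction
  have hκ := (((isBigO_refl (fun p => κ p - 1) l).mul hweight).trans hκg).const_mul_left 3
  refine ((hR.add hκ).neg_left.mul ((hden.inv₀ hpos).isBigO_one ℝ)).congr' ?_
    (.of_forall fun p => mul_one _)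
  filter_upwards [hu, hden.eventually_ne hpos] with p hp hne
  rw [← mul_assoc, ← hp.eigenvalue_sub_mul_integral, mul_inv_cancel_right₀ hne]

/-! ### Dependence on `(η, δ)` -/

/-- The factor `1 + ε` along the curve `ε = -(π / 2) η (1 + δ)`, at `p = (η, δ)`. -/
def scale (p : ℝ × ℝ) : ℝ := 1 - π / 2 * p.1 * (1 + p.2)

/-- The function `1 - η (1 + ε) x` appearing in the denominators of `Tdd`. -/
def weight (p : ℝ × ℝ) (x : ℝ) : ℝ := 1 - p.1 * scale p * x

/-- The ratio `ρ` of `1 + ε` to the weight at the midpoint of `[0, π]`. After division of the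
weight by its midpoint value, `Tdd` becomes the operator of `IsCentredEigenpair (η ρ) (ρ ^ 2)`. -/
def midRatio (p : ℝ × ℝ) : ℝ := scale p / weight p (π / 2)

lemma weight_eq_mul_centredWeight {p : ℝ × ℝ} (hp : weight p (π / 2) ≠ 0) (x : ℝ) :
    weight p x = weight p (π / 2) * centredWeight (p.1 * midRatio p) x := by
  have hratio : midRatio p * weight p (π / 2) = scale p := div_mul_cancel₀ _ hp
  unfold centredWeight
  unfold weight at hratio ⊢
  linear_combination p.1 * (x - π / 2) * hratio

lemma isCentredEigenpair_of_Tdd {p : ℝ × ℝ} {L : ℝ} {u : ℝ → ℝ} (hu : ContDiffOn ℝ 2 u (Icc 0 π))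
    (hp : ∀ x ∈ Icc 0 π, weight p x ≠ 0) (heq : ∀ x ∈ Ioo 0 π, Tdd p.1 p.2 u x + L * u x = 0)
    (h0 : u 0 = 0) (hπ : u π = 0) :
    IsCentredEigenpair (p.1 * midRatio p) (midRatio p ^ 2) L u where
  contDiffOn := hu
  apply_zero := h0
  apply_pi := hπ
  ode x hx := by
    have hmid : weight p (π / 2) ≠ 0 := hp _ ⟨by positivity, by linarith [pi_pos]⟩
    have hweight := weight_eq_mul_centredWeight hmid x
    have hx0 : centredWeight (p.1 * midRatio p) x ≠ 0 :=
      right_ne_zero_of_mul (hweight ▸ hp x (Ioo_subset_Icc_self hx))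
    have hscale : scale p = midRatio p * weight p (π / 2) := (div_mul_cancel₀ _ hmid).symm
    have hode := heq x hx
    rw [Tdd, ← scale, ← weight, hweight, hscale] at hode
    linear_combination (norm := (field_simp; ring)) centredWeight (p.1 * midRatio p) x ^ 2 * hode

lemma eventually_weight_ne_zero : ∀ᶠ p in 𝓝 (0 : ℝ × ℝ), ∀ x ∈ Icc 0 π, weight p x ≠ 0 := by
  refine isCompact_Icc.eventually_forall_of_forall_eventually fun x _ => ?_
  have hcont : Continuous fun q : (ℝ × ℝ) × ℝ => weight q.1 q.2 := by
    unfold weight scale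
    fun_prop
  exact hcont.continuousAt.eventually_ne (by simp [weight])

lemma differentiableAt_midRatio_zero : DifferentiableAt ℝ midRatio 0 := by
  unfold midRatio weight scale
  fun_prop (disch := norm_num)

lemma midRatio_zero : midRatio 0 = 1 := by simp [midRatio, weight, scale]

/-- The quantity `ξ`, quadratically small in `(η, δ)`, for which the numerator of `midRatio - 1` is
`-(π / 2) ξ`. -/
def detuning (p : ℝ × ℝ) : ℝ := p.1 * (p.2 + π / 2 * p.1 * (1 + p.2))

lemma midRatio_sq_sub_one {p : ℝ × ℝ} (hp : weight p (π / 2) ≠ 0) :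
    midRatio p ^ 2 - 1 = -π * detuning p * ((midRatio p + 1) / (2 * weight p (π / 2))) := by
  have hratio : midRatio p - 1 = -(π / 2) * detuning p / weight p (π / 2) := by
    rw [midRatio, div_sub_one hp]
    unfold weight scale detuning
    ring
  linear_combination (midRatio p + 1) * hratio

lemma isBigO_sub_apply_zero_norm {f : ℝ × ℝ → ℝ} (hf : DifferentiableAt ℝ f 0) :
    (fun p => f p - f 0) =O[𝓝 0] fun p => ‖p‖ := by
  simpa only [sub_zero] using hf.isBigO_sub.norm_right

lemma isBigO_fst_norm : (fun p : ℝ × ℝ => p.1) =O[𝓝 0] fun p => ‖p‖ :=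
  isBigO_fst_prod'.norm_right

lemma isBigO_snd_norm : (fun p : ℝ × ℝ => p.2) =O[𝓝 0] fun p => ‖p‖ :=
  isBigO_snd_prod'.norm_right

lemma isBigO_detuning : detuning =O[𝓝 0] fun p => ‖p‖ ^ 2 := by
  have hfactor : (fun p : ℝ × ℝ => p.2 + π / 2 * p.1 * (1 + p.2)) =O[𝓝 0] fun p => ‖p‖ := by
    simpa using isBigO_sub_apply_zero_norm
      (f := fun p : ℝ × ℝ => p.2 + π / 2 * p.1 * (1 + p.2)) (by fun_prop)
  exact (isBigO_fst_norm.mul hfactor).congr_right fun _ => (sq _).symm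

lemma isBigO_midRatio_factor_sub_one :
    (fun p => (midRatio p + 1) / (2 * weight p (π / 2)) - 1) =O[𝓝 0] fun p => ‖p‖ := by
  have hmid : DifferentiableAt ℝ (fun p => weight p (π / 2)) 0 := by
    unfold weight scale
    fun_prop
  have hratio := differentiableAt_midRatio_zero
  have hdiff : DifferentiableAt ℝ (fun p => (midRatio p + 1) / (2 * weight p (π / 2))) 0 := by
    fun_prop (disch := norm_num [weight])
  have hzero : (midRatio 0 + 1) / (2 * weight 0 (π / 2)) = 1 := by
    norm_num [midRatio_zero, weight]
  simpa only [hzero] using isBigO_sub_apply_zero_norm hdiff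

lemma isBigO_midRatio_sq_sub_one :
    (fun p => midRatio p ^ 2 - 1) =O[𝓝 0] fun p => ‖p‖ ^ 2 := by
  have hfactor : (fun p => (midRatio p + 1) / (2 * weight p (π / 2))) =O[𝓝 0]
      fun _ => (1 : ℝ) := by
    have htendsto := isBigO_midRatio_factor_sub_one.trans_tendsto (tendsto_norm_zero (E := ℝ × ℝ))
    exact (tendsto_sub_nhds_zero_iff.1 htendsto).isBigO_one ℝ
  refine ((isBigO_detuning.const_mul_left (-π)).mul hfactor).congr' ?_
    (.of_forall fun p => mul_one _)
  filter_upwards [eventually_weight_ne_zero] with p hp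
  exact (midRatio_sq_sub_one (hp _ ⟨by positivity, by linarith [pi_pos]⟩)).symm

lemma isBigO_midRatio_sq_sub_one_mul_fst :
    (fun p : ℝ × ℝ => (midRatio p ^ 2 - 1) * p.1) =O[𝓝 0] fun p => ‖p‖ ^ 3 := by
  simpa only [← pow_succ] using isBigO_midRatio_sq_sub_one.mul isBigO_fst_norm

lemma isBigO_centredExpansion_sub :
    (fun p : ℝ × ℝ => 1 + 3 * midRatio p ^ 2 + secondOrderCoeff * (p.1 * midRatio p) ^ 2
      - (4 - 3 * π * p.1 * p.2 - 16 * p.1 ^ 2)) =O[𝓝 0] fun p => ‖p‖ ^ 3 := by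
  have hbounded : (fun p : ℝ × ℝ => p.1) =O[𝓝 0] fun _ => (1 : ℝ) :=
    continuous_fst.continuousAt.tendsto.isBigO_one ℝ
  have hfactor := (isBigO_detuning.mul isBigO_midRatio_factor_sub_one).const_mul_left (-3 * π)
  have hcubic := ((isBigO_fst_norm.pow 2).mul isBigO_snd_norm).const_mul_left (3 / 2 * π ^ 2)
  have hratio := (isBigO_midRatio_sq_sub_one_mul_fst.mul hbounded).const_mul_left secondOrderCoeff
  simp only [← pow_succ, mul_one] at hfactor hcubic hratio
  refine ((hfactor.sub hcubic).add hratio).congr' ?_ .rfl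
  filter_upwards [eventually_weight_ne_zero] with p hp
  have hsq := midRatio_sq_sub_one (hp _ ⟨by positivity, by linarith [pi_pos]⟩)
  unfold secondOrderCoeff
  unfold detuning at hsq ⊢
  linear_combination (-3) * hsq

theorem isBigO_eigenvalue_sub {Λ : ℝ × ℝ → ℝ} {Φ : ℝ × ℝ → ℝ → ℝ}
    (hbdd : (fun q : (ℝ × ℝ) × ℝ => Φ q.1 q.2) =O[𝓝 0 ×ˢ 𝓟 (Icc 0 π)] (fun _ => (1 : ℝ)))
    (hΦ : ∀ᶠ p in 𝓝 0, ContDiffOn ℝ 2 (Φ p) (Icc 0 π))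
    (heq : ∀ᶠ p in 𝓝 0, ∀ x ∈ Ioo 0 π, Tdd p.1 p.2 (Φ p) x + Λ p * Φ p x = 0)
    (hbc : ∀ᶠ p in 𝓝 0, Φ p 0 = 0 ∧ Φ p π = 0)
    (hnorm : ∀ᶠ p in 𝓝 0, ∫ x in 0..π, Φ p x * sin x = π / 2) :
    (fun p => Λ p - (4 - 3 * π * p.1 * p.2 - 16 * p.1 ^ 2)) =O[𝓝 0] fun p => ‖p‖ ^ 3 := by
  have hratio : midRatio =O[𝓝 0] fun _ => (1 : ℝ) :=
    differentiableAt_midRatio_zero.continuousAt.tendsto.isBigO_one ℝ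
  have hslope : (fun p : ℝ × ℝ => p.1 * midRatio p) =O[𝓝 0] fun p => ‖p‖ := by
    simpa only [mul_one] using isBigO_fst_norm.mul hratio
  have hdefect : (fun p : ℝ × ℝ => (midRatio p ^ 2 - 1) * (p.1 * midRatio p)) =O[𝓝 0]
      fun p => ‖p‖ ^ 3 := by
    simpa only [mul_assoc, mul_one] using isBigO_midRatio_sq_sub_one_mul_fst.mul hratio
  have hpair : ∀ᶠ p in 𝓝 0, IsCentredEigenpair (p.1 * midRatio p) (midRatio p ^ 2) (Λ p) (Φ p) := by
    filter_upwards [eventually_weight_ne_zero, hΦ, heq, hbc] with p hp hu hode h0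
    exact isCentredEigenpair_of_Tdd hu hp hode h0.1 h0.2
  have hcentred := isBigO_centredEigenvalue_sub (hslope.trans_tendsto tendsto_norm_zero)
    (hslope.pow 3) hdefect hpair hbdd hnorm
  simpa only [sub_add_sub_cancel] using hcentred.add isBigO_centredExpansion_sub

lemma isBigO_norm_pow_sum_abs_pow (n : ℕ) :
    (fun p : ℝ × ℝ => ‖p‖ ^ n) =O[𝓝 0] fun p => |p.1| ^ n + |p.2| ^ n := by
  refine .of_norm_le fun p => ?_
  rw [norm_pow, norm_norm, Prod.norm_def, Real.norm_eq_abs, Real.norm_eq_abs]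
  rcases max_choice |p.1| |p.2| with h | h <;> rw [h]
  · exact le_add_of_nonneg_right (by positivity)
  · exact le_add_of_nonneg_left (by positivity)

lemma exists_isOpen_abs_le_of_isBigO {X : Type*} [TopologicalSpace X] {U : Set X} (hU : IsOpen U)
    {x : X} (hx : x ∈ U) {f g : X → ℝ} (hg : ∀ y, 0 ≤ g y) (hfg : f =O[𝓝 x] g) :
    ∃ C > 0, ∃ V ⊆ U, IsOpen V ∧ x ∈ V ∧ ∀ y ∈ V, |f y| ≤ C * g y := by
  obtain ⟨C, hC, hbound⟩ := hfg.exists_pos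
  obtain ⟨V, hV, hVopen, hxV⟩ := eventually_nhds_iff.1 hbound.bound
  refine ⟨C, hC, V ∩ U, inter_subset_right, hVopen.inter hU, ⟨hxV, hx⟩, fun y hy => ?_⟩
  simpa only [Real.norm_eq_abs, abs_of_nonneg (hg y)] using hV y hy.1

theorem first_dirichlet_branch_second_order_general
    (U : Set (ℝ × ℝ)) (hUopen : IsOpen U) (hU0 : (0, 0) ∈ U)
    (Λ : ℝ × ℝ → ℝ) (Φ : ℝ × ℝ → ℝ → ℝ)
    (hΦ : ContinuousOn (fun q : (ℝ × ℝ) × ℝ => Φ q.1 q.2) (U ×ˢ Set.Icc 0 π))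
    (hΦ2 : ∀ p ∈ U, ContDiffOn ℝ 2 (Φ p) (Set.Icc 0 π))
    (heq : ∀ p ∈ U, ∀ x ∈ Set.Ioo (0:ℝ) π, Tdd p.1 p.2 (Φ p) x + Λ p * Φ p x = 0)
    (hbc : ∀ p ∈ U, Φ p 0 = 0 ∧ Φ p π = 0)
    (hnorm : ∀ p ∈ U, ∫ x in (0:ℝ)..π, Φ p x * Real.sin x = π/2) :
    ∃ C > (0:ℝ), ∃ V ⊆ U, IsOpen V ∧ (0, 0) ∈ V ∧
      ∀ p ∈ V, |Λ p - 4 + 3 * π * p.1 * p.2 + 16 * p.1^2| ≤ C * (|p.1|^3 + |p.2|^3) := by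
  have hU : U ∈ 𝓝 0 := hUopen.mem_nhds hU0
  have near {P : ℝ × ℝ → Prop} (h : ∀ p ∈ U, P p) : ∀ᶠ p in 𝓝 0, P p := mem_of_superset hU h
  have hexpansion := (isBigO_eigenvalue_sub
    (isBigO_one_of_continuousOn_prod hU isCompact_Icc hΦ) (near hΦ2) (near heq) (near hbc)
    (near hnorm)).trans (isBigO_norm_pow_sum_abs_pow 3)
  refine exists_isOpen_abs_le_of_isBigO hUopen hU0 (fun p => by positivity)
    (hexpansion.congr_left fun p => ?_)
  ring

lemma contDiffOn_slice_of_analyticOnNhd {E : Type*} [NormedAddCommGroup E] [NormedSpace ℝ E]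
    {F : E → ℝ → ℝ} {U : Set E} {a b : ℝ} (hab : a < b)
    (hF : AnalyticOnNhd ℝ (fun q : E × ℝ => F q.1 q.2) (U ×ˢ Icc a b)) {p : E} (hp : p ∈ U)
    {n : WithTop ℕ∞} : ContDiffOn ℝ n (F p) (Icc a b) :=
  AnalyticOnNhd.contDiffOn
    (fun x hx => (hF (p, x) ⟨hp, hx⟩).along_snd) (uniqueDiffOn_Icc hab)

/-- Second-order expansion of the first Dirichlet eigenvalue branch of
`T_{η,δ}`: `Λ(η,δ) = 4 − 3πηδ − 16η² + O(|η|³ + |δ|³)`. -/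
theorem first_dirichlet_branch_second_order
    (U : Set (ℝ × ℝ)) (hUopen : IsOpen U) (hU0 : (0, 0) ∈ U)
    (Λ : ℝ × ℝ → ℝ) (Φ : ℝ × ℝ → ℝ → ℝ)
    (hΛ : AnalyticOnNhd ℝ Λ U)
    (hΦ : AnalyticOnNhd ℝ (fun q : (ℝ × ℝ) × ℝ => Φ q.1 q.2) (U ×ˢ Set.Icc 0 π))
    (heq : ∀ p ∈ U, ∀ x ∈ Set.Ioo (0:ℝ) π, Tdd p.1 p.2 (Φ p) x + Λ p * Φ p x = 0)
    (hbc : ∀ p ∈ U, Φ p 0 = 0 ∧ Φ p π = 0)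
    (hnorm : ∀ p ∈ U, ∫ x in (0:ℝ)..π, Φ p x * Real.sin x = π/2)
    (hΛ0 : Λ (0, 0) = 4)
    (hΦ0 : ∀ x ∈ Set.Icc (0:ℝ) π, Φ (0, 0) x = Real.sin x) :
    ∃ C > (0:ℝ), ∃ V ⊆ U, IsOpen V ∧ (0, 0) ∈ V ∧
      ∀ p ∈ V, |Λ p - 4 + 3 * π * p.1 * p.2 + 16 * p.1^2| ≤ C * (|p.1|^3 + |p.2|^3) :=
  first_dirichlet_branch_second_order_general U hUopen hU0 Λ Φ hΦ.continuousOn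
    (fun _ hp => contDiffOn_slice_of_analyticOnNhd pi_pos hΦ hp) heq hbc hnorm

end
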